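/- Let m and n be integers with 2 ≤ m ≤ n, m ≠ 3 and n ≠ 3, and let G = K_m ∨ K_n be the join of the complete graphs K_m and K_n. Then γ_MR(G) = 1. -/

import Mathlib

/-!
The join of two complete graphs is complete, and in a complete graph every closed neighborhood is
the whole vertex set. So condition (i) says exactly that the weight is at least `1`, which is the
lower bound. To attain it on `N` vertices, start from the constant `1`, raise `a` values to `2` and
lower `b` values to `-1`; the weight becomes `N + a - 2 * b`. Taking `a = 1` for even `N`, `a = 2`
for odd `N ≥ 5` and `a = 0` for `N = 1` makes it equal to `1` for a suitable `b`.
-/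

open Finset

namespace MRD

variable {V : Type*}

open scoped Classical

/-- Sum of `f` over the closed neighborhood of `v` in `G`:
`f(N[v]) = \sum_{u \in N[v]} f(u)`. -/
noncomputable def closedNbhdSum [Fintype V] (G : SimpleGraph V) (f : V → ℤ) (v : V) : ℤ :=
  ∑ u ∈ Finset.univ.filter (fun u => G.Adj v u ∨ u = v), f u

/-- `f : V → {-1, 1, 2}` is a Majority Roman Dominating Function (MRDF) on `G`:
(i) `f(N[v]) ≥ 1` for at least half of the vertices, and (ii) every vertex with value `-1`
is adjacent to a vertex with value `2`. -/
noncomputable def IsMRDF [Fintype V] (G : SimpleGraph V) (f : V → ℤ) : Prop :=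
  (∀ v, f v = -1 ∨ f v = 1 ∨ f v = 2) ∧
  Fintype.card V ≤ 2 * (Finset.univ.filter (fun v => 1 ≤ closedNbhdSum G f v)).card ∧
  (∀ u, f u = -1 → ∃ w, G.Adj u w ∧ f w = 2)

/-- The majority Roman domination number `γ_MR(G)`: the minimum weight
`w(f) = ∑_v f(v)` over all MRDFs `f` on `G`. -/
noncomputable def mrdNum [Fintype V] (G : SimpleGraph V) : ℤ :=
  sInf {w : ℤ | ∃ f : V → ℤ, IsMRDF G f ∧ w = ∑ v, f v}

/-- The join `G ∨ H` of two simple graphs: disjoint union plus all edges between the parts. -/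
def join {α β : Type*} (G : SimpleGraph α) (H : SimpleGraph β) : SimpleGraph (α ⊕ β) where
  Adj x y :=
    match x, y with
    | .inl a, .inl b => G.Adj a b
    | .inr a, .inr b => H.Adj a b
    | .inl _, .inr _ => True
    | .inr _, .inl _ => True
  symm := by constructor; rintro (a | a) (b | b) h <;> simp_all [SimpleGraph.adj_comm]
  loopless := by constructor; rintro (a | a) h <;> simp_all

/-- The corona `G ∘ H` of two simple graphs: one copy of `G` and `|V(G)|` copies of `H`,
where the `v`-th vertex of `G` is joined to every vertex of the `v`-th copy of `H`. -/
def corona {α β : Type*} (G : SimpleGraph α) (H : SimpleGraph β) : SimpleGraph (α ⊕ α × β) where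
  Adj x y :=
    match x, y with
    | .inl u, .inl v => G.Adj u v
    | .inr p, .inr q => p.1 = q.1 ∧ H.Adj p.2 q.2
    | .inl u, .inr p => u = p.1
    | .inr p, .inl u => u = p.1
  symm := by
    constructor; rintro (u | ⟨u, x⟩) (v | ⟨v, y⟩) h <;> simp_all [SimpleGraph.adj_comm, eq_comm]
  loopless := by constructor; rintro (u | ⟨u, x⟩) h <;> simp_all

/-- `S` is a dominating set of `G`. -/
def IsDomSet (G : SimpleGraph V) (S : Finset V) : Prop :=
  ∀ v, v ∉ S → ∃ u ∈ S, G.Adj v u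

/-- The domination number `γ(G)`. -/
noncomputable def domNum [Fintype V] (G : SimpleGraph V) : ℕ :=
  sInf {k | ∃ S : Finset V, IsDomSet G S ∧ S.card = k}

/-- A set of vertices is independent if no two of its vertices are adjacent. -/
def IsIndepSet (G : SimpleGraph V) (S : Finset V) : Prop :=
  ∀ a ∈ S, ∀ b ∈ S, ¬ G.Adj a b

/-- The independence number `β₀(G)`. -/
noncomputable def indepNum [Fintype V] (G : SimpleGraph V) : ℕ :=
  sSup {k | ∃ S : Finset V, IsIndepSet G S ∧ S.card = k}

/-- The cocktail party graph `K_{2n} - M` (complete graph minus a perfect matching),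
realized on `Fin n × Fin 2`: `(i,a)` and `(j,b)` are adjacent iff `i ≠ j`. -/
def cocktail (n : ℕ) : SimpleGraph (Fin n × Fin 2) where
  Adj x y := x.1 ≠ y.1
  symm := ⟨fun _ _ h => h.symm⟩
  loopless := ⟨fun _ h => h rfl⟩

end MRD

namespace MRD

section Complete

variable {V : Type*} [Fintype V]

theorem join_top_top (α β : Type*) :
    join (⊤ : SimpleGraph α) (⊤ : SimpleGraph β) = ⊤ := by
  ext (a | a) (b | b) <;> simp [join]

theorem closedNbhdSum_top (f : V → ℤ) (v : V) : closedNbhdSum ⊤ f v = ∑ u, f u := by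
  have mem_closedNbhd (u : V) : (⊤ : SimpleGraph V).Adj v u ∨ u = v :=
    (ne_or_eq u v).imp_left Ne.symm
  simp only [closedNbhdSum, mem_closedNbhd, filter_true]

theorem IsMRDF.exists_one_le_closedNbhdSum [Nonempty V] {G : SimpleGraph V} {f : V → ℤ}
    (hf : IsMRDF G f) : ∃ v, 1 ≤ closedNbhdSum G f v := by
  obtain ⟨-, hmajority, -⟩ := hf
  have hpos := Fintype.card_pos (α := V)
  obtain ⟨v, hv⟩ := card_pos.mp (by omega : 0 < #{v | 1 ≤ closedNbhdSum G f v})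
  exact ⟨v, (mem_filter.mp hv).2⟩

theorem isMRDF_top_iff [Nonempty V] {f : V → ℤ} :
    IsMRDF ⊤ f ↔ (∀ v, f v = -1 ∨ f v = 1 ∨ f v = 2) ∧ 1 ≤ ∑ v, f v ∧
      ((∃ u, f u = -1) → ∃ w, f w = 2) := by
  constructor
  · intro hf
    obtain ⟨v, hv⟩ := hf.exists_one_le_closedNbhdSum
    refine ⟨hf.1, closedNbhdSum_top f v ▸ hv, fun ⟨u, hu⟩ => ?_⟩
    obtain ⟨w, -, hw⟩ := hf.2.2 u hu
    exact ⟨w, hw⟩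
  · rintro ⟨hvalues, hweight, hroman⟩
    refine ⟨hvalues, ?_, fun u hu => ?_⟩
    · simp only [closedNbhdSum_top, hweight, filter_true, card_univ]
      omega
    · obtain ⟨w, hw⟩ := hroman ⟨u, hu⟩
      have huw : u ≠ w := by
        rintro rfl
        omega
      exact ⟨w, huw, hw⟩

/-- The labelling with value `2` on `S`, `-1` on `T` and `1` elsewhere, for disjoint `S` and `T`.
Writing it as a sum of indicators makes its weight immediate. -/
def romanLabelling [DecidableEq V] (S T : Finset V) (v : V) : ℤ :=
  1 + (if v ∈ S then 1 else 0) - 2 * (if v ∈ T then 1 else 0)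

theorem sum_romanLabelling [DecidableEq V] (S T : Finset V) :
    ∑ v, romanLabelling S T v = Fintype.card V + #S - 2 * #T := by
  simp [romanLabelling, sum_add_distrib, mul_comm]

theorem isMRDF_top_romanLabelling [Nonempty V] [DecidableEq V] {S T : Finset V}
    (hST : Disjoint S T) (hne : T.Nonempty → S.Nonempty)
    (hcard : 2 * #T < Fintype.card V + #S) : IsMRDF ⊤ (romanLabelling S T) := by
  refine isMRDF_top_iff.mpr ⟨fun v => ?_, ?_, ?_⟩
  · have hnotMem : v ∈ S → v ∉ T := fun hS => disjoint_left.mp hST hS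
    by_cases hS : v ∈ S <;> by_cases hT : v ∈ T <;> simp_all [romanLabelling]
  · rw [sum_romanLabelling]
    omega
  · rintro ⟨u, hu⟩
    have huT : u ∈ T := by
      by_contra huT
      simp only [romanLabelling, huT, if_false] at hu
      split_ifs at hu <;> omega
    obtain ⟨w, hwS⟩ := hne ⟨u, huT⟩
    exact ⟨w, by simp [romanLabelling, hwS, disjoint_left.mp hST hwS]⟩

theorem exists_isMRDF_top_sum_eq_one [Nonempty V] (hV : Fintype.card V ≠ 3) :
    ∃ f : V → ℤ, IsMRDF ⊤ f ∧ ∑ v, f v = 1 := by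
  classical
  have hpos := Fintype.card_pos (α := V)
  obtain ⟨a, b, hab, hweight, hroman⟩ : ∃ a b, a + b ≤ Fintype.card V ∧
      Fintype.card V + a = 2 * b + 1 ∧ (0 < b → 0 < a) := by
    obtain hone | ⟨k, hk⟩ | ⟨hge, k, hk⟩ : Fintype.card V = 1 ∨ Even (Fintype.card V) ∨
        5 ≤ Fintype.card V ∧ Odd (Fintype.card V) := by grind
    · exact ⟨0, 0, by omega⟩
    · exact ⟨1, k, by omega⟩
    · exact ⟨2, k + 1, by omega⟩
  obtain ⟨S, -, rfl⟩ := exists_subset_card_eq (s := (univ : Finset V)) (n := a)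
    (by rw [card_univ]; omega)
  obtain ⟨T, hTS, rfl⟩ := exists_subset_card_eq (s := Sᶜ) (n := b) (by rw [card_compl]; omega)
  have hST : Disjoint S T := disjoint_compl_right.mono_right hTS
  refine ⟨romanLabelling S T, isMRDF_top_romanLabelling hST ?_ (by omega), ?_⟩
  · simpa only [card_pos] using hroman
  · rw [sum_romanLabelling]
    omega

theorem mrdNum_top [Nonempty V] (hV : Fintype.card V ≠ 3) :
    mrdNum (⊤ : SimpleGraph V) = 1 := by
  obtain ⟨f, hf, hsum⟩ := exists_isMRDF_top_sum_eq_one hV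
  have hleast : IsLeast {w : ℤ | ∃ f : V → ℤ, IsMRDF ⊤ f ∧ w = ∑ v, f v} 1 := by
    refine ⟨⟨f, hf, hsum.symm⟩, ?_⟩
    rintro _ ⟨g, hg, rfl⟩
    exact (isMRDF_top_iff.mp hg).2.1
  exact hleast.csInf_eq

end Complete

end MRD

theorem mrdNum_join_complete_general {α β : Type*} [Fintype α] [Fintype β] [Nonempty (α ⊕ β)]
    (h : Fintype.card α + Fintype.card β ≠ 3) :
    MRD.mrdNum (MRD.join (⊤ : SimpleGraph α) (⊤ : SimpleGraph β)) = 1 := by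
  rw [MRD.join_top_top]
  exact MRD.mrdNum_top (Fintype.card_sum.trans_ne h)

/-- For `2 ≤ m ≤ n` with `m ≠ 3` and `n ≠ 3`, `γ_MR(K_m ∨ K_n) = 1`. -/
theorem mrdNum_join_complete (m n : ℕ) (hm : 2 ≤ m) (hmn : m ≤ n) (hm3 : m ≠ 3) (hn3 : n ≠ 3) :
    MRD.mrdNum (MRD.join (⊤ : SimpleGraph (Fin m)) (⊤ : SimpleGraph (Fin n))) = 1 := by
  have : NeZero m := ⟨by omega⟩
  exact mrdNum_join_complete_general (by simp only [Fintype.card_fin]; omega)
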